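/- Let v₀ > 0 and let v : [0,T] → ℝ solve the scattering-free two-photon Riccati equation with initial value v₀. Then for every t ∈ [0,T] the coefficients are recovered pointwise from the internal data: σ_b(t) = −(v'(t) + σ_a(t)·v(t))/v(t)², and the function s ↦ μ(s)/v(s) is differentiable with derivative μ(s)·σ_b(s) ≥ 0, so μ/v is nondecreasing on [0,T]. -/

import Mathlib

/-!
Along a solution, `v' = -(σa + σb v) v` is a linear equation for `v` with continuous coefficient
`g = σa + σb v`. With the integrating factor `exp (∫₀ˢ g)`, the product `v s * exp (∫₀ˢ g)` is
constant, so `v s * exp (∫₀ˢ g) = v₀ > 0` and `v` never vanishes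
(`SolvesRiccati.pos`). Once `v ≠ 0`, the coefficient `σb` is obtained by solving the equation for
it, and the quotient rule with `μ' = -σa μ` gives `(μ / v)' = μ σb ≥ 0`.
-/

open Set

/-- `v` solves the scattering-free two-photon Riccati equation
`v' = -σa v - σb v²` on `[0,T]` with initial value `v₀`
(derivative taken within `[0,T]`, i.e. one-sided at the endpoints). -/
def SolvesRiccati (σa σb : ℝ → ℝ) (T : ℝ) (v : ℝ → ℝ) (v0 : ℝ) : Prop :=
  (∀ s ∈ Set.Icc (0 : ℝ) T,
      HasDerivWithinAt v (-(σa s * v s) - σb s * (v s) ^ 2) (Set.Icc 0 T) s) ∧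
    v 0 = v0

/-- The fundamental theorem of calculus on `[0,T]`, with one-sided derivatives at the endpoints. -/
theorem hasDerivWithinAt_integral_Icc {T : ℝ} {f : ℝ → ℝ} (hf : ContinuousOn f (Set.Icc 0 T))
    {s : ℝ} (hs : s ∈ Set.Icc (0 : ℝ) T) :
    HasDerivWithinAt (fun t => ∫ r in (0 : ℝ)..t, f r) (f s) (Set.Icc 0 T) s := by
  haveI : Fact (s ∈ Set.Icc (0 : ℝ) T) := ⟨hs⟩
  refine intervalIntegral.integral_hasDerivWithinAt_right ?_ ?_ (hf s hs)
  · refine ContinuousOn.intervalIntegrable_of_Icc hs.1 (hf.mono ?_)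
    exact Set.Icc_subset_Icc_right hs.2
  · exact hf.stronglyMeasurableAtFilter_nhdsWithin measurableSet_Icc s

theorem SolvesRiccati.pos {T : ℝ} {σa σb v : ℝ → ℝ} {v0 : ℝ}
    (hσa : ContinuousOn σa (Set.Icc 0 T)) (hσb : ContinuousOn σb (Set.Icc 0 T))
    (hv0 : 0 < v0) (hv : SolvesRiccati σa σb T v v0) {s : ℝ} (hs : s ∈ Set.Icc (0 : ℝ) T) :
    0 < v s := by
  obtain ⟨hd, h0⟩ := hv
  have hvc : ContinuousOn v (Set.Icc 0 T) := fun x hx => (hd x hx).continuousWithinAt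
  have hg : ContinuousOn (fun x => σa x + σb x * v x) (Set.Icc 0 T) := hσa.add (hσb.mul hvc)
  have hw : ∀ x ∈ Set.Icc (0 : ℝ) T, HasDerivWithinAt
      (fun t => v t * Real.exp (∫ r in (0 : ℝ)..t, (σa r + σb r * v r))) 0 (Set.Icc 0 T) x := by
    intro x hx
    refine ((hd x hx).mul (hasDerivWithinAt_integral_Icc hg hx).exp).congr_deriv ?_
    ring
  have hconst := constant_of_derivWithin_zero (fun x hx => (hw x hx).differentiableWithinAt)
    (fun x hx => (hw x (Set.Ico_subset_Icc_self hx)).derivWithin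
      (uniqueDiffOn_Icc (hx.1.trans_lt hx.2) x (Set.Ico_subset_Icc_self hx))) s hs
  simp only [intervalIntegral.integral_same, Real.exp_zero, mul_one, h0] at hconst
  exact pos_of_mul_pos_left (hconst ▸ hv0) (Real.exp_pos _).le

theorem stmt15
    (T : ℝ) (hT : 0 < T)
    (σa σb : ℝ → ℝ)
    (hσa_cont : ContinuousOn σa (Set.Icc 0 T))
    (hσb_cont : ContinuousOn σb (Set.Icc 0 T))
    (hσa_nonneg : ∀ t ∈ Set.Icc (0 : ℝ) T, 0 ≤ σa t)
    (hσb_nonneg : ∀ t ∈ Set.Icc (0 : ℝ) T, 0 ≤ σb t)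
    (μ : ℝ → ℝ) (hμ : ∀ t, μ t = Real.exp (-∫ r in (0 : ℝ)..t, σa r))
    (v0 : ℝ) (hv0 : 0 < v0)
    (v : ℝ → ℝ) (hv : SolvesRiccati σa σb T v v0) :
    (∀ t ∈ Set.Icc (0 : ℝ) T,
      σb t = -(derivWithin v (Set.Icc 0 T) t + σa t * v t) / (v t) ^ 2) ∧
    (∀ s ∈ Set.Icc (0 : ℝ) T,
      HasDerivWithinAt (fun r => μ r / v r) (μ s * σb s) (Set.Icc 0 T) s ∧
        0 ≤ μ s * σb s) ∧
    MonotoneOn (fun r => μ r / v r) (Set.Icc 0 T) := by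
  have hpos : ∀ s ∈ Set.Icc (0 : ℝ) T, 0 < v s := fun s hs => hv.pos hσa_cont hσb_cont hv0 hs
  have hμpos : ∀ s, 0 < μ s := fun s => by rw [hμ]; exact Real.exp_pos _
  have hμd : ∀ s ∈ Set.Icc (0 : ℝ) T, HasDerivWithinAt μ (-(σa s * μ s)) (Set.Icc 0 T) s := by
    intro s hs
    rw [hμ s, funext hμ]
    refine (hasDerivWithinAt_integral_Icc hσa_cont hs).neg.exp.congr_deriv ?_
    simp only [Pi.neg_apply]
    ring
  have hq : ∀ s ∈ Set.Icc (0 : ℝ) T,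
      HasDerivWithinAt (fun r => μ r / v r) (μ s * σb s) (Set.Icc 0 T) s := by
    intro s hs
    have hne := (hpos s hs).ne'
    refine ((hμd s hs).div (hv.1 s hs) hne).congr_deriv ?_
    field_simp
    ring
  have hnn : ∀ s ∈ Set.Icc (0 : ℝ) T, 0 ≤ μ s * σb s :=
    fun s hs => mul_nonneg (hμpos s).le (hσb_nonneg s hs)
  refine ⟨fun t ht => ?_, fun s hs => ⟨hq s hs, hnn s hs⟩, ?_⟩
  · have hne := (hpos t ht).ne'
    rw [(hv.1 t ht).derivWithin (uniqueDiffOn_Icc hT t ht)]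
    field_simp
    ring
  · exact monotoneOn_of_hasDerivWithinAt_nonneg (convex_Icc 0 T)
      (fun s hs => (hq s hs).continuousWithinAt)
      (fun s hs => (hq s (interior_subset hs)).mono interior_subset)
      (fun s hs => hnn s (interior_subset hs))
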